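/- Let G be a group, T a set, and let g, g' ∈ G and t ∈ T. Then the commutator [g, t·g'] = g·(t·g')·g^{-1}·(t·g')^{-1}, as an element of the free product G ∗ F_T, is sufficiently generic. -/

import Mathlib

/-- The permutation matrix of a permutation `σ` of `{1,…,n}`: the 0–1 matrix whose
`(i,j)` entry is `1` exactly when `i = σ j`. -/
def permMatrix {n : ℕ} (R : Type*) [Zero R] [One R] (σ : Equiv.Perm (Fin n)) :
    Matrix (Fin n) (Fin n) R :=
  Matrix.of fun i j => if i = σ j then 1 else 0

/-- An element `x` of the free product `G ∗ F_T` (of a group `G` with the free group on a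
set `T`) is *sufficiently generic* if for every field `L` containing `ℂ`, every `n ≥ 1` and
every group homomorphism `ρ : G ∗ F_T → GL_n(L)` such that (a) each `ρ(h)`, for `h ∈ G`, is
the identity matrix or the permutation matrix of a derangement, and (b) the family of all
entries of the matrices `ρ(t')`, `t' ∈ T`, is algebraically independent over `ℂ`, the
matrix `ρ(x) − I_n` is invertible or zero. -/
def SufficientlyGeneric (G : Type*) [Group G] (T : Type*)
    (x : Monoid.Coprod G (FreeGroup T)) : Prop :=
  ∀ (L : Type*) [Field L] [Algebra ℂ L] (n : ℕ), 1 ≤ n →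
    ∀ ρ : Monoid.Coprod G (FreeGroup T) →* Matrix.GeneralLinearGroup (Fin n) L,
      (∀ h : G, ((ρ (Monoid.Coprod.inl h) : Matrix (Fin n) (Fin n) L) = 1 ∨
        ∃ σ : Equiv.Perm (Fin n), (∀ i, σ i ≠ i) ∧
          (ρ (Monoid.Coprod.inl h) : Matrix (Fin n) (Fin n) L) = permMatrix L σ)) →
      AlgebraicIndependent ℂ
        (fun p : T × Fin n × Fin n =>
          (ρ (Monoid.Coprod.inr (FreeGroup.of p.1)) : Matrix (Fin n) (Fin n) L) p.2.1 p.2.2) →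
      (IsUnit ((ρ x : Matrix (Fin n) (Fin n) L) - 1) ∨
        ((ρ x : Matrix (Fin n) (Fin n) L) - 1 = 0))

/-!
If `a`, `y` are units of a ring, then `⁅a, y⁆ - 1 = (a * y - y * a) * (y * a)⁻¹`, so only the
determinant of the additive commutator of `ρ(g)` and `ρ(t) ρ(g')` matters. Translating a matrix of
independent indeterminates by an invertible matrix of scalars is an invertible linear change of
variables, which absorbs `ρ(g')`. When `ρ(g)` is the permutation matrix of a derangement `σ`, the
determinant is then a polynomial with scalar coefficients in independent indeterminates, and it is
nonzero since it specialises at `diagonal d` to `± ∏ i, (d (σ i) - d i)`; one may take for `d` a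
family of independent indeterminates.
-/

open Matrix MvPolynomial
open scoped commutatorElement

section GenericMatrix

variable {l m R A : Type*} [CommRing R] [CommRing A] [Algebra R A]

/-- A matrix over an `R`-algebra is *generic* over `R` if its entries, as a family indexed by the
positions, are algebraically independent over `R`. -/
def IsGenericMatrix (R : Type*) [CommRing R] [Algebra R A] (X : Matrix l m A) : Prop :=
  AlgebraicIndependent R fun p : l × m => X p.1 p.2

lemma aeval_ne_zero_of_aeval_ne_zero {ι S : Type*} [CommSemiring S] [Algebra R S] {x : ι → A}
    (hx : AlgebraicIndependent R x) (y : ι → S) {P : MvPolynomial ι R} (hP : aeval y P ≠ 0) :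
    aeval x P ≠ 0 :=
  (map_ne_zero_iff _ hx).2 (ne_zero_of_map hP)

variable [Fintype m]

/-- The substitution of `R[Xᵢⱼ]` that replaces the matrix of indeterminates `(Xᵢⱼ)` by its right
translate by the scalar matrix `B`. -/
noncomputable def translateSubst (l : Type*) (B : Matrix m m R) :
    MvPolynomial (l × m) R →ₐ[R] MvPolynomial (l × m) R :=
  aeval fun p => (mvPolynomialX l m R * B.map (C (σ := l × m))) p.1 p.2

lemma aeval_comp_translateSubst (X : Matrix l m A) (B : Matrix m m R) :
    (aeval fun p : l × m => X p.1 p.2).comp (translateSubst l B) =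
      aeval fun p : l × m => (X * B.map (algebraMap R A)) p.1 p.2 := by
  ext p
  simp [translateSubst, mul_apply]

lemma translateSubst_comp_translateSubst (B B' : Matrix m m R) :
    (translateSubst l B).comp (translateSubst l B') = translateSubst l (B * B') := by
  rw [translateSubst, aeval_comp_translateSubst, translateSubst, Matrix.mul_assoc, Matrix.map_mul,
    algebraMap_eq]

variable [DecidableEq m]

lemma translateSubst_one : translateSubst l (1 : Matrix m m R) = AlgHom.id R _ := by
  rw [translateSubst, Matrix.map_one _ C_0 C_1, Matrix.mul_one]
  exact aeval_X_left

lemma translateSubst_injective {B : Matrix m m R} (hB : IsUnit B) :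
    Function.Injective (translateSubst l B) := by
  obtain ⟨B', hB'⟩ := hB.exists_left_inv
  have hcomp : (translateSubst l B').comp (translateSubst l B) = AlgHom.id R _ := by
    rw [translateSubst_comp_translateSubst, hB', translateSubst_one]
  exact Function.LeftInverse.injective (g := translateSubst l B') fun P => AlgHom.congr_fun hcomp P

lemma IsGenericMatrix.mul_map_algebraMap {X : Matrix l m A} (hX : IsGenericMatrix R X)
    {B : Matrix m m R} (hB : IsUnit B) : IsGenericMatrix R (X * B.map (algebraMap R A)) := by
  rw [IsGenericMatrix, AlgebraicIndependent, ← aeval_comp_translateSubst, AlgHom.coe_comp]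
  exact Function.Injective.comp hX (translateSubst_injective hB)

lemma mapMatrix_aeval_lie_mvPolynomialX (M : Matrix m m R) (X : Matrix m m A) :
    (aeval fun p : m × m => X p.1 p.2).mapMatrix ⁅M.map (C (σ := m × m)), mvPolynomialX m m R⁆ =
      ⁅M.map (algebraMap R A), X⁆ := by
  have hM : (aeval (R := R) fun p : m × m => X p.1 p.2).mapMatrix (M.map C) =
      M.map (algebraMap R A) := by
    ext i j
    simp
  rw [Ring.lie_def, Ring.lie_def, map_sub, map_mul, map_mul, hM, mvPolynomialX_mapMatrix_aeval]

lemma IsGenericMatrix.det_lie_map_ne_zero {S : Type*} [CommRing S] [Algebra R S]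
    {X : Matrix m m A} (hX : IsGenericMatrix R X) {M : Matrix m m R} (Y : Matrix m m S)
    (hY : ⁅M.map (algebraMap R S), Y⁆.det ≠ 0) : ⁅M.map (algebraMap R A), X⁆.det ≠ 0 := by
  rw [← mapMatrix_aeval_lie_mvPolynomialX, ← AlgHom.map_det] at hY ⊢
  exact aeval_ne_zero_of_aeval_ne_zero hX _ hY

end GenericMatrix

section PermutationMatrix

variable {m R S : Type*} [DecidableEq m]

lemma map_perm_permMatrix [NonAssocSemiring R] [NonAssocSemiring S] (f : R →+* S)
    (σ : Equiv.Perm m) : (σ.permMatrix R).map f = σ.permMatrix S :=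
  PEquiv.map_toMatrix f _

variable [Fintype m]

lemma lie_permMatrix_diagonal [Ring R] (σ : Equiv.Perm m) (d : m → R) :
    ⁅σ.permMatrix R, diagonal d⁆ = diagonal (fun i => d (σ i) - d i) * σ.permMatrix R := by
  ext i j
  rcases eq_or_ne (σ i) j with rfl | hij
  · simp [Ring.lie_def, PEquiv.toMatrix_apply]
  · simp [Ring.lie_def, PEquiv.toMatrix_apply, hij]

variable [CommRing R] [CommRing S]

lemma det_lie_permMatrix_diagonal (σ : Equiv.Perm m) (d : m → R) :
    ⁅σ.permMatrix R, diagonal d⁆.det = (∏ i, (d (σ i) - d i)) * Equiv.Perm.sign σ := by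
  rw [lie_permMatrix_diagonal, det_mul, det_diagonal, det_permutation]

lemma det_lie_permMatrix_diagonal_ne_zero [IsDomain R] {σ : Equiv.Perm m}
    (hσ : σ ∈ derangements m) {d : m → R} (hd : Function.Injective d) :
    ⁅σ.permMatrix R, diagonal d⁆.det ≠ 0 := by
  rw [det_lie_permMatrix_diagonal]
  refine mul_ne_zero (Finset.prod_ne_zero_iff.2 fun i _ => sub_ne_zero.2 (hd.ne (hσ i))) ?_
  exact ((Equiv.Perm.sign σ).isUnit.map (Int.castRingHom R)).ne_zero

lemma IsGenericMatrix.det_lie_permMatrix_ne_zero [IsDomain R] [Algebra R S] {X : Matrix m m S}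
    (hX : IsGenericMatrix R X) {σ : Equiv.Perm m} (hσ : σ ∈ derangements m) :
    ⁅σ.permMatrix S, X⁆.det ≠ 0 := by
  rw [← map_perm_permMatrix (algebraMap R S)]
  refine hX.det_lie_map_ne_zero (diagonal (MvPolynomial.X : m → MvPolynomial m R)) ?_
  rw [map_perm_permMatrix]
  exact det_lie_permMatrix_diagonal_ne_zero hσ (X_injective (R := R))

end PermutationMatrix

lemma val_commutatorElement_sub_one {R : Type*} [Ring R] (a b : Rˣ) :
    ((⁅a, b⁆ : Rˣ) : R) - 1 = ⁅(a : R), (b : R)⁆ * ((b * a)⁻¹ : Rˣ) := by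
  have hab : ⁅a, b⁆ * (b * a) = a * b := by
    simp only [commutatorElement_def, mul_assoc, inv_mul_cancel_left, inv_mul_cancel, mul_one]
  rw [Units.eq_mul_inv_iff_mul_eq, sub_mul, one_mul, ← Units.val_mul, hab, Ring.lie_def,
    Units.val_mul, Units.val_mul]

lemma isUnit_commutatorElement_sub_one_iff {R : Type*} [Ring R] {a b : Rˣ} :
    IsUnit (((⁅a, b⁆ : Rˣ) : R) - 1) ↔ IsUnit ⁅(a : R), (b : R)⁆ := by
  rw [val_commutatorElement_sub_one, Units.isUnit_mul_units]

lemma isUnit_matrix_of_isUnit_map {m R S : Type*} [Fintype m] [DecidableEq m] [CommRing R]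
    [CommRing S] (f : R →+* S) [IsLocalHom f] {B : Matrix m m R} (hB : IsUnit (B.map f)) :
    IsUnit B := by
  rw [isUnit_iff_isUnit_det] at hB ⊢
  rwa [← RingHom.mapMatrix_apply, ← RingHom.map_det, isUnit_map_iff] at hB

section Representation

variable {m K L : Type*} [Fintype m] [DecidableEq m] [Field K] [Field L] [Algebra K L]

lemma IsGenericMatrix.isUnit_commutatorElement_sub_one {a x : GL m L}
    (hx : IsGenericMatrix K x.val) {σ : Equiv.Perm m} (hσ : σ ∈ derangements m)
    (ha : a.val = σ.permMatrix L) : IsUnit ((⁅a, x⁆ : GL m L).val - 1) := by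
  rw [isUnit_commutatorElement_sub_one_iff, ha, isUnit_iff_isUnit_det, isUnit_iff_ne_zero]
  exact hx.det_lie_permMatrix_ne_zero hσ

open Monoid.Coprod in
theorem statement10_general {G T : Type*} [Group G]
    (ρ : Monoid.Coprod G (FreeGroup T) →* GL m L) (g g' : G) (t : T)
    (hg : (ρ (inl g)).val = 1 ∨
      ∃ σ ∈ derangements m, (ρ (inl g)).val = σ.permMatrix L)
    (hg' : ∃ B : Matrix m m K, (ρ (inl g')).val = B.map (algebraMap K L))
    (ht : IsGenericMatrix K (ρ (inr (FreeGroup.of t))).val) :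
    let x : Monoid.Coprod G (FreeGroup T) :=
      inl g * (inr (FreeGroup.of t) * inl g') * (inl g)⁻¹ * (inr (FreeGroup.of t) * inl g')⁻¹
    IsUnit ((ρ x).val - 1) ∨ (ρ x).val - 1 = 0 := by
  intro x
  have hx : ρ x = ⁅ρ (inl g), ρ (inr (FreeGroup.of t)) * ρ (inl g')⁆ := by
    simp only [x, commutatorElement_def, map_mul, map_inv]
  rw [hx]
  rcases hg with hg | ⟨σ, hσ, hg⟩
  · right
    rw [Units.val_eq_one.1 hg, commutatorElement_one_left, Units.val_one, sub_self]
  · left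
    obtain ⟨B, hB⟩ := hg'
    have hB_unit : IsUnit B :=
      isUnit_matrix_of_isUnit_map (algebraMap K L) (hB ▸ (ρ (inl g')).isUnit)
    have hgeneric : IsGenericMatrix K (ρ (inr (FreeGroup.of t)) * ρ (inl g')).val := by
      rw [Units.val_mul, hB]
      exact ht.mul_map_algebraMap hB_unit
    exact hgeneric.isUnit_commutatorElement_sub_one hσ hg

end Representation

lemma permMatrix_eq_perm_permMatrix_inv {n : ℕ} (R : Type*) [Zero R] [One R]
    (σ : Equiv.Perm (Fin n)) : permMatrix R σ = σ⁻¹.permMatrix R := by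
  ext i j
  simp [permMatrix, PEquiv.toMatrix_apply, Equiv.symm_apply_eq]

lemma inv_mem_derangements {α : Type*} {σ : Equiv.Perm α} (hσ : σ ∈ derangements α) :
    σ⁻¹ ∈ derangements α :=
  fun i hi => hσ i (Equiv.Perm.inv_eq_iff_eq.1 hi).symm

lemma eq_one_or_exists_derangement_permMatrix {n : ℕ} {R : Type*} [Zero R] [One R]
    {M : Matrix (Fin n) (Fin n) R}
    (hM : M = 1 ∨ ∃ σ : Equiv.Perm (Fin n), (∀ i, σ i ≠ i) ∧ M = permMatrix R σ) :
    M = 1 ∨ ∃ σ ∈ derangements (Fin n), M = σ.permMatrix R :=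
  hM.imp_right fun ⟨σ, hσ, h⟩ =>
    ⟨σ⁻¹, inv_mem_derangements hσ, h.trans (permMatrix_eq_perm_permMatrix_inv R σ)⟩

lemma exists_eq_map_of_eq_one_or_permMatrix {m R S : Type*} [DecidableEq m]
    [NonAssocSemiring R] [NonAssocSemiring S] (f : R →+* S) {M : Matrix m m S}
    (hM : M = 1 ∨ ∃ σ : Equiv.Perm m, M = σ.permMatrix S) :
    ∃ B : Matrix m m R, M = B.map f := by
  rcases hM with rfl | ⟨σ, rfl⟩
  · exact ⟨1, (Matrix.map_one f f.map_zero f.map_one).symm⟩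
  · exact ⟨σ.permMatrix R, (map_perm_permMatrix f σ).symm⟩

/-- The commutator `[g, t·g'] = g·(t·g')·g⁻¹·(t·g')⁻¹` in `G ∗ F_T` is
sufficiently generic. -/
theorem statement10 {G : Type*} [Group G] {T : Type*} (g g' : G) (t : T) :
    SufficientlyGeneric G T
      (Monoid.Coprod.inl g * (Monoid.Coprod.inr (FreeGroup.of t) * Monoid.Coprod.inl g') *
        (Monoid.Coprod.inl g)⁻¹ *
        (Monoid.Coprod.inr (FreeGroup.of t) * Monoid.Coprod.inl g')⁻¹) := by
  intro L _ _ n _ ρ hG hT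
  have hperm h := eq_one_or_exists_derangement_permMatrix (hG h)
  have hgeneric : IsGenericMatrix ℂ (ρ (Monoid.Coprod.inr (FreeGroup.of t))).val :=
    hT.comp (Prod.mk t) (Prod.mk_right_injective t)
  have hscalar := exists_eq_map_of_eq_one_or_permMatrix (algebraMap ℂ L)
    ((hperm g').imp_right fun ⟨σ, _, hσ⟩ => ⟨σ, hσ⟩)
  exact statement10_general ρ g g' t (hperm g) hscalar hgeneric
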